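/- There is no representation of 4 boxes (of any prescribed positive widths and heights) in which all 6 unordered pairs of boxes touch; consequently, in every representation of 4 boxes at most 5 unordered pairs of boxes touch. -/

import Mathlib

/-!
Suppose all six pairs touch. The projections of the four boxes to each axis meet pairwise, so by
Helly's theorem on the line all four boxes share a point `(a, b)`, where `a` is the largest left
end and `b` the largest bottom end. Label each box by the pair of truth values
(`left end < a`, `bottom end < b`): this names a quadrant at `(a, b)` which the box occupies near
that point. Disjointness of interiors makes the labelling injective
(`label_ne_of_separated`), hence bijective onto the four quadrants.

The boxes labelled south-west and north-east share more than the point `(a, b)`, so the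
south-west box also reaches strictly into the north-west or the south-east quadrant. There it
overlaps the box with that label, a contradiction.

The bound on the number of contacts follows, since there are exactly six pairs `i < j` in `Fin 4`.
-/


open Set

/-- The closed axis-aligned box with bottom-left corner `pos`, width `w` and height `h`. -/
def pBox (pos : ℝ × ℝ) (w h : ℝ) : Set (ℝ × ℝ) :=
  Icc pos.1 (pos.1 + w) ×ˢ Icc pos.2 (pos.2 + h)

/-- The open interior of the axis-aligned box. -/
def pBoxInt (pos : ℝ × ℝ) (w h : ℝ) : Set (ℝ × ℝ) :=
  Ioo pos.1 (pos.1 + w) ×ˢ Ioo pos.2 (pos.2 + h)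

/-- Two placed boxes touch if their intersection is a line segment of positive
length, i.e. the segment between two distinct points. -/
def Touches (A B : Set (ℝ × ℝ)) : Prop :=
  ∃ p q : ℝ × ℝ, p ≠ q ∧ A ∩ B = segment ℝ p q

/-- A representation of boxes with prescribed widths `w` and heights `h`:
a choice of positions such that the open interiors are pairwise disjoint. -/
def IsRepresentation {ι : Type*} (w h : ι → ℝ) (pos : ι → ℝ × ℝ) : Prop :=
  Pairwise fun i j => Disjoint (pBoxInt (pos i) (w i) (h i)) (pBoxInt (pos j) (w j) (h j))

open scoped Classical in
/-- The number of unordered pairs of boxes that touch in a representation. -/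
noncomputable def touchCount {n : ℕ} (w h : Fin n → ℝ) (pos : Fin n → ℝ × ℝ) : ℕ :=
  (Finset.univ.filter fun q : Fin n × Fin n =>
    q.1 < q.2 ∧
      Touches (pBox (pos q.1) (w q.1) (h q.1)) (pBox (pos q.2) (w q.2) (h q.2))).card

lemma Touches.symm {A B : Set (ℝ × ℝ)} (hAB : Touches A B) : Touches B A := by
  obtain ⟨p, q, hpq, he⟩ := hAB
  exact ⟨p, q, hpq, by rw [inter_comm, he]⟩

/-- Touching boxes meet in both projections, and strictly overlap in at least one of them. -/
lemma Touches.overlap {p q : ℝ × ℝ} {w h w' h' : ℝ}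
    (ht : Touches (pBox p w h) (pBox q w' h')) :
    (p.1 ≤ q.1 + w' ∧ q.1 ≤ p.1 + w ∧ p.2 ≤ q.2 + h' ∧ q.2 ≤ p.2 + h) ∧
      ((p.1 < q.1 + w' ∧ q.1 < p.1 + w) ∨ (p.2 < q.2 + h' ∧ q.2 < p.2 + h)) := by
  obtain ⟨u, v, huv, he⟩ := ht
  have hu : u ∈ pBox p w h ∩ pBox q w' h' := he ▸ left_mem_segment ℝ u v
  have hv : v ∈ pBox p w h ∩ pBox q w' h' := he ▸ right_mem_segment ℝ u v
  simp only [pBox, mem_inter_iff, mem_prod, mem_Icc] at hu hv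
  obtain ⟨⟨⟨_, _⟩, _, _⟩, ⟨_, _⟩, _, _⟩ := hu
  obtain ⟨⟨⟨_, _⟩, _, _⟩, ⟨_, _⟩, _, _⟩ := hv
  refine ⟨⟨by linarith, by linarith, by linarith, by linarith⟩, ?_⟩
  have hne : u.1 ≠ v.1 ∨ u.2 ≠ v.2 := by
    by_contra! hc
    exact huv (Prod.ext hc.1 hc.2)
  rcases hne with hne | hne <;> rcases lt_or_gt_of_ne hne with _ | _
  · exact Or.inl ⟨by linarith, by linarith⟩
  · exact Or.inl ⟨by linarith, by linarith⟩
  · exact Or.inr ⟨by linarith, by linarith⟩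
  · exact Or.inr ⟨by linarith, by linarith⟩

/-- Boxes with disjoint interiors are weakly separated by an axis-parallel line. -/
lemma separated_of_disjoint {p q : ℝ × ℝ} {w h w' h' : ℝ}
    (hw : 0 < w) (hh : 0 < h) (hw' : 0 < w') (hh' : 0 < h')
    (hd : Disjoint (pBoxInt p w h) (pBoxInt q w' h')) :
    p.1 + w ≤ q.1 ∨ q.1 + w' ≤ p.1 ∨ p.2 + h ≤ q.2 ∨ q.2 + h' ≤ p.2 := by
  by_contra! hc
  obtain ⟨h1, h2, h3, h4⟩ := hc
  obtain ⟨x, hx, hx'⟩ : ∃ x, max p.1 q.1 < x ∧ x < min (p.1 + w) (q.1 + w') :=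
    exists_between (by simp [*])
  obtain ⟨y, hy, hy'⟩ : ∃ y, max p.2 q.2 < y ∧ y < min (p.2 + h) (q.2 + h') :=
    exists_between (by simp [*])
  simp only [max_lt_iff, lt_min_iff] at hx hx' hy hy'
  have hmem : (x, y) ∈ pBoxInt p w h := ⟨⟨hx.1, hx'.1⟩, ⟨hy.1, hy'.1⟩⟩
  exact Set.disjoint_left.mp hd hmem ⟨⟨hx.2, hx'.2⟩, ⟨hy.2, hy'.2⟩⟩

/-- Helly's theorem on the line for four intervals `[l i, l i + s i]`. -/
lemma exists_common_point {l s : Fin 4 → ℝ} (hs : ∀ i, 0 < s i)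
    (hm : ∀ i j, i ≠ j → l i ≤ l j + s j) : ∃ a, ∀ i, l i ≤ a ∧ a ≤ l i + s i := by
  obtain ⟨k, hk⟩ := Finite.exists_max l
  refine ⟨l k, fun i => ⟨hk i, ?_⟩⟩
  rcases eq_or_ne k i with rfl | hne
  · linarith [hs k]
  · exact hm k i hne

/-- Of two separated intervals containing `a`, the one on the left, with ends `l < r`, reaches
below `a`, and the one on the right, with left end `l'`, does not. -/
lemma label_ne_of_separated {a l r l' : ℝ} (hl : l < r) (hr : a ≤ r) (hl' : l' ≤ a)
    (hsep : r ≤ l') : l < a ∧ ¬ l' < a :=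
  ⟨by linarith, by linarith⟩

lemma not_all_touch (w h : Fin 4 → ℝ) (hw : ∀ i, 0 < w i) (hh : ∀ i, 0 < h i)
    (pos : Fin 4 → ℝ × ℝ) (hrep : IsRepresentation w h pos) :
    ¬ ∀ i j : Fin 4, i ≠ j →
        Touches (pBox (pos i) (w i) (h i)) (pBox (pos j) (w j) (h j)) := by
  classical
  intro ht
  have hsep : ∀ i j, i ≠ j → _ := fun i j hij =>
    separated_of_disjoint (hw i) (hh i) (hw j) (hh j) (hrep hij)
  obtain ⟨a, ha⟩ := exists_common_point (l := fun i => (pos i).1) hw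
    fun i j hij => (ht i j hij).overlap.1.1
  obtain ⟨b, hb⟩ := exists_common_point (l := fun i => (pos i).2) hh
    fun i j hij => (ht i j hij).overlap.1.2.2.1
  let f : Fin 4 → Bool × Bool := fun i => (decide ((pos i).1 < a), decide ((pos i).2 < b))
  have hinj : Function.Injective f := by
    intro i j hf
    by_contra hij
    simp only [f, Prod.mk.injEq, decide_eq_decide] at hf
    have hwi : (pos i).1 < (pos i).1 + w i := by linarith [hw i]
    have hwj : (pos j).1 < (pos j).1 + w j := by linarith [hw j]
    have hhi : (pos i).2 < (pos i).2 + h i := by linarith [hh i]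
    have hhj : (pos j).2 < (pos j).2 + h j := by linarith [hh j]
    rcases hsep i j hij with hs | hs | hs | hs
    · have := label_ne_of_separated hwi (ha i).2 (ha j).1 hs
      tauto
    · have := label_ne_of_separated hwj (ha j).2 (ha i).1 hs
      tauto
    · have := label_ne_of_separated hhi (hb i).2 (hb j).1 hs
      tauto
    · have := label_ne_of_separated hhj (hb j).2 (hb i).1 hs
      tauto
  have hsurj : Function.Surjective f :=
    ((Fintype.bijective_iff_injective_and_card f).2 ⟨hinj, by simp⟩).2
  obtain ⟨sw, hsw⟩ := hsurj (true, true)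
  obtain ⟨ne, hne⟩ := hsurj (false, false)
  obtain ⟨nw, hnw⟩ := hsurj (true, false)
  obtain ⟨se, hse⟩ := hsurj (false, true)
  have h1 : sw ≠ ne := by rintro rfl; simp [hsw] at hne
  have h2 : sw ≠ nw := by rintro rfl; simp [hsw] at hnw
  have h3 : sw ≠ se := by rintro rfl; simp [hsw] at hse
  simp only [f, Prod.mk.injEq, decide_eq_true_eq, decide_eq_false_iff_not, not_lt]
    at hsw hne hnw hse
  have := hw nw
  have := hh nw
  have := hw se
  have := hh se
  have := ha sw
  have := hb sw
  have := ha nw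
  have := hb nw
  have := ha se
  have := hb se
  rcases (ht sw ne h1).overlap.2 with ⟨_, _⟩ | ⟨_, _⟩
  · -- the south-west box extends to the right of `a`, into the south-east box
    rcases hsep sw se h3 with hs | hs | hs | hs <;> linarith
  · -- the south-west box extends above `b`, into the north-west box
    rcases hsep sw nw h2 with hs | hs | hs | hs <;> linarith

/-- No representation of `4` boxes realizes all `6` unordered pairs as contacts;
consequently, in every representation of `4` boxes at most `5` pairs touch. -/
theorem no_K4_representation (w h : Fin 4 → ℝ)
    (hw : ∀ i, 0 < w i) (hh : ∀ i, 0 < h i)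
    (pos : Fin 4 → ℝ × ℝ) (hrep : IsRepresentation w h pos) :
    (¬ ∀ i j : Fin 4, i ≠ j →
        Touches (pBox (pos i) (w i) (h i)) (pBox (pos j) (w j) (h j))) ∧
      touchCount w h pos ≤ 5 := by
  classical
  have hno := not_all_touch w h hw hh pos hrep
  refine ⟨hno, ?_⟩
  by_contra! hc
  apply hno
  have hcard : (Finset.univ.filter fun q : Fin 4 × Fin 4 => q.1 < q.2).card = 6 := by decide
  -- six touching pairs exhaust the six pairs `i < j`
  have heq := Finset.eq_of_subset_of_card_le
    (s := Finset.univ.filter fun q : Fin 4 × Fin 4 => q.1 < q.2 ∧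
      Touches (pBox (pos q.1) (w q.1) (h q.1)) (pBox (pos q.2) (w q.2) (h q.2)))
    (t := Finset.univ.filter fun q : Fin 4 × Fin 4 => q.1 < q.2)
    (fun q hq => by
      simp only [Finset.mem_filter, Finset.mem_univ, true_and] at hq ⊢
      exact hq.1)
    (by
      rw [hcard]
      unfold touchCount at hc
      refine (Nat.succ_le_of_lt hc).trans (le_of_eq ?_)
      congr)
  have hlt : ∀ i j : Fin 4, i < j →
      Touches (pBox (pos i) (w i) (h i)) (pBox (pos j) (w j) (h j)) := by
    intro i j hij
    have hm : (i, j) ∈ Finset.univ.filter fun q : Fin 4 × Fin 4 => q.1 < q.2 := by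
      simpa using hij
    rw [← heq] at hm
    exact (Finset.mem_filter.mp hm).2.2
  intro i j hij
  rcases lt_or_gt_of_ne hij with hl | hl
  · exact hlt i j hl
  · exact (hlt j i hl).symm
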